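/- arXiv:1406.6041 — 3 statements merged into one kernel-verified Lean document; each statement's English description precedes it below -/
import Mathlib

section
/- Let α be a simple root and let β be a positive root which is not simple, such that α+β is not a root. Then there exists no simple root α' ≠ α such that (α+β)−α' is a root. -/
open scoped RealInnerProductSpace

/-- The Cartan pairing `⟨α^∨, x⟩ = 2(α,x)/(α,α)`. -/
noncomputable def cpair {V : Type*} [NormedAddCommGroup V] [InnerProductSpace ℝ V]
    (α x : V) : ℝ :=
  2 * ⟪α, x⟫ / ⟪α, α⟫

/-- A finite reduced crystallographic root system `Φ` in `V`, together with a fixed base `S`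
(the set of simple roots): every root is a nonnegative or nonpositive integer combination of
simple roots. -/
structure BasedRootSystem (V : Type*) [NormedAddCommGroup V] [InnerProductSpace ℝ V] where
  Φ : Set V
  S : Set V
  finite : Φ.Finite
  ne_zero : ∀ α ∈ Φ, α ≠ 0
  neg_mem : ∀ α ∈ Φ, -α ∈ Φ
  reflect_mem : ∀ α ∈ Φ, ∀ β ∈ Φ, β - cpair α β • α ∈ Φ
  pairing_int : ∀ α ∈ Φ, ∀ β ∈ Φ, ∃ n : ℤ, cpair α β = n
  reduced : ∀ α ∈ Φ, ∀ t : ℝ, t • α ∈ Φ → t = 1 ∨ t = -1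
  base_subset : S ⊆ Φ
  base_indep : LinearIndependent ℝ ((↑) : S → V)
  pos_or_neg : ∀ β ∈ Φ,
      (∃ (t : Finset V) (c : V → ℕ), ↑t ⊆ S ∧ β = ∑ s ∈ t, (c s : ℝ) • s) ∨
      (∃ (t : Finset V) (c : V → ℕ), ↑t ⊆ S ∧ -β = ∑ s ∈ t, (c s : ℝ) • s)

/-- `β` is a positive root: a root which is a nonnegative integer combination of the
simple roots. -/
def BasedRootSystem.IsPositiveRoot {V : Type*} [NormedAddCommGroup V] [InnerProductSpace ℝ V]
    (R : BasedRootSystem V) (β : V) : Prop :=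
  β ∈ R.Φ ∧ ∃ (t : Finset V) (c : V → ℕ), ↑t ⊆ R.S ∧ β = ∑ s ∈ t, (c s : ℝ) • s

namespace BasedRootSystem

variable {V : Type*} [NormedAddCommGroup V] [InnerProductSpace ℝ V] (R : BasedRootSystem V)

/-- If two distinct roots form an acute angle, then their difference is a root. -/
lemma sub_mem_of_inner_pos {x y : V} (hx : x ∈ R.Φ) (hy : y ∈ R.Φ) (hxy : 0 < ⟪x, y⟫)
    (hne : x ≠ y) : x - y ∈ R.Φ := by
  have hx0 : 0 < ⟪x, x⟫ := real_inner_self_pos.2 (R.ne_zero x hx)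
  have hy0 : 0 < ⟪y, y⟫ := real_inner_self_pos.2 (R.ne_zero y hy)
  obtain ⟨m, hm⟩ := R.pairing_int x hx y hy
  obtain ⟨n, hn⟩ := R.pairing_int y hy x hx
  have hm_pos : 0 < m := by
    have : (0 : ℝ) < m := by rw [← hm, cpair]; positivity
    exact_mod_cast this
  have hn_pos : 0 < n := by
    have : (0 : ℝ) < n := by rw [← hn, cpair, real_inner_comm]; positivity
    exact_mod_cast this
  have hlt : ⟪x, y⟫ * ⟪x, y⟫ < ⟪x, x⟫ * ⟪y, y⟫ := by
    refine lt_of_le_of_ne (real_inner_mul_inner_self_le x y) fun heq => hne ?_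
    have hcomb : y = (⟪x, y⟫ / ⟪x, x⟫) • x := by
      rw [← sub_eq_zero, ← inner_self_eq_zero (𝕜 := ℝ)]
      simp only [inner_sub_left, inner_sub_right, inner_smul_left, inner_smul_right,
        real_inner_comm x y, conj_trivial]
      field_simp
      linarith
    have ht : 0 < ⟪x, y⟫ / ⟪x, x⟫ := div_pos hxy hx0
    rcases R.reduced x hx _ (hcomb ▸ hy) with h | h
    · rw [h, one_smul] at hcomb
      exact hcomb.symm
    · linarith
  have hmn : m * n < 4 := by
    have : (m : ℝ) * n < 4 := by
      rw [← hm, ← hn, cpair, cpair, real_inner_comm x y, div_mul_div_comm,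
        div_lt_iff₀ (mul_pos hx0 hy0)]
      linarith
    exact_mod_cast this
  have hone : m = 1 ∨ n = 1 := by
    by_contra! h
    have hm2 : 2 ≤ m := by omega
    have hn2 : 2 ≤ n := by omega
    nlinarith
  rcases hone with rfl | rfl
  · have h := R.neg_mem _ (R.reflect_mem x hx y hy)
    simpa [hm] using h
  · simpa [hn] using R.reflect_mem y hy x hx

/-- If two non-opposite roots form an obtuse angle, then their sum is a root. -/
lemma add_mem_of_inner_neg {x y : V} (hx : x ∈ R.Φ) (hy : y ∈ R.Φ) (hxy : ⟪x, y⟫ < 0)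
    (hne : x + y ≠ 0) : x + y ∈ R.Φ := by
  have h := R.sub_mem_of_inner_pos hx (R.neg_mem y hy) (by simpa using hxy)
    (fun h => hne (eq_neg_iff_add_eq_zero.1 h))
  simpa using h

/-- The coordinate functional of a simple root. -/
lemma exists_coord {α : V} (hα : α ∈ R.S) :
    ∃ f : V →ₗ[ℝ] ℝ, f α = 1 ∧ ∀ s ∈ R.S, s ≠ α → f s = 0 := by
  have hindep : LinearIndepOn ℝ id R.S := R.base_indep
  let b := Module.Basis.extend hindep
  have hsub := hindep.subset_extend (Set.subset_univ _)
  have hb : ∀ s (hs : s ∈ R.S), b.repr s = Finsupp.single ⟨s, hsub hs⟩ 1 := fun s hs => by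
    rw [← b.repr_self, Module.Basis.extend_apply_self]
  refine ⟨b.coord ⟨α, hsub hα⟩, ?_, fun s hs hne => ?_⟩
  · rw [Module.Basis.coord_apply, hb α hα, Finsupp.single_eq_same]
  · rw [Module.Basis.coord_apply, hb s hs]
    exact Finsupp.single_eq_of_ne fun h => hne (congrArg Subtype.val h).symm

lemma coord_sum_nonneg {α : V} {f : V →ₗ[ℝ] ℝ} (hfα : f α = 1)
    (hf : ∀ s ∈ R.S, s ≠ α → f s = 0) {t : Finset V} (c : V → ℕ) (ht : ↑t ⊆ R.S) :
    0 ≤ f (∑ s ∈ t, (c s : ℝ) • s) := by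
  rw [map_sum]
  refine Finset.sum_nonneg fun s hs => ?_
  rw [map_smul, smul_eq_mul]
  by_cases h : s = α
  · simp [h, hfα]
  · simp [hf s (ht hs) h]

/-- The difference of two distinct simple roots is not a root. -/
lemma simple_sub_simple_notMem {α α' : V} (hα : α ∈ R.S) (hα' : α' ∈ R.S) (hne : α' ≠ α) :
    α - α' ∉ R.Φ := by
  intro h
  obtain ⟨f, hfα, hf⟩ := R.exists_coord hα
  obtain ⟨g, hgα, hg⟩ := R.exists_coord hα'
  rcases R.pos_or_neg _ h with ⟨t, c, ht, hc⟩ | ⟨t, c, ht, hc⟩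
  · have := R.coord_sum_nonneg hgα hg c ht
    rw [← hc, map_sub, hgα, hg α hα hne.symm] at this
    linarith
  · have := R.coord_sum_nonneg hfα hf c ht
    rw [← hc, map_neg, map_sub, hfα, hf α' hα' hne] at this
    linarith

lemma IsPositiveRoot.simple_add_ne_zero {R : BasedRootSystem V} {α β : V}
    (hβ : R.IsPositiveRoot β) (hα : α ∈ R.S) : α + β ≠ 0 := by
  intro h
  obtain ⟨f, hfα, hf⟩ := R.exists_coord hα
  obtain ⟨-, t, c, ht, hc⟩ := hβ
  have hnonneg := R.coord_sum_nonneg hfα hf c ht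
  have hzero := congrArg f h
  rw [← hc] at hnonneg
  rw [map_add, hfα, map_zero] at hzero
  linarith

end BasedRootSystem

/-- Let `α` be a simple root and `β` a positive root which is not simple,
such that `α + β` is not a root. Then there is no simple root `α' ≠ α` such that
`(α + β) - α'` is a root. -/
theorem no_simple_root_subtract {V : Type*} [NormedAddCommGroup V] [InnerProductSpace ℝ V]
    [FiniteDimensional ℝ V] (R : BasedRootSystem V) (α β : V)
    (hα : α ∈ R.S) (hβ : R.IsPositiveRoot β) (hβns : β ∉ R.S) (hαβ : α + β ∉ R.Φ) :
    ¬ ∃ α' ∈ R.S, α' ≠ α ∧ (α + β) - α' ∈ R.Φ := by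
  rintro ⟨α', hα', hne, hγ⟩
  have hsum := hβ.simple_add_ne_zero hα
  have hsimple : ⟪α, α'⟫ ≤ 0 := by
    by_contra! h
    exact R.simple_sub_simple_notMem hα hα' hne
      (R.sub_mem_of_inner_pos (R.base_subset hα) (R.base_subset hα') h hne.symm)
  have hαβ_nonneg : 0 ≤ ⟪α, β⟫ := by
    by_contra! h
    exact hαβ (R.add_mem_of_inner_neg (R.base_subset hα) hβ.1 h hsum)
  have hγα'_nonneg : 0 ≤ ⟪α + β - α', α'⟫ := by
    by_contra! h
    have hmem := R.add_mem_of_inner_neg hγ (R.base_subset hα') h (by simpa using hsum)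
    exact hαβ (by simpa using hmem)
  have hδ : 0 < ⟪β - α', β - α'⟫ :=
    real_inner_self_pos.2 (sub_ne_zero.2 fun h => hβns (h ▸ hα'))
  have hγβ : 0 < ⟪α + β - α', β⟫ := by
    simp only [inner_sub_left, inner_add_left, inner_sub_right, real_inner_comm β α'] at *
    linarith
  have hmem := R.sub_mem_of_inner_pos hγ hβ.1 hγβ fun h => hne <| by
    rw [add_sub_right_comm, add_eq_right, sub_eq_zero] at h
    exact h.symm
  rw [add_sub_right_comm, add_sub_cancel_right] at hmem
  exact R.simple_sub_simple_notMem hα hα' hne hmem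
end

section
/- Assume Φ is simply laced, i.e. ⟨α^∨, β⟩ ∈ {−1, 0, 1} for all roots α, β with β ∉ {α, −α}. Then there do not exist a root γ and pairwise distinct simple roots α1, α2, α3 such that α2 is non-orthogonal to both α1 and α3 (i.e. ⟨α2^∨, α1⟩ ≠ 0 and ⟨α2^∨, α3⟩ ≠ 0) and γ−α1, γ−α2 and γ−α3 are all roots. -/
open scoped RealInnerProductSpace

/-- A vector `s` of a linearly independent set has a coordinate functional vanishing on the other
vectors of the set. -/
lemma LinearIndependent.exists_coord {K V : Type*} [Field K] [AddCommGroup V] [Module K V]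
    {S : Set V} (hS : LinearIndependent K ((↑) : S → V)) {s : V} (hs : s ∈ S) :
    ∃ f : V →ₗ[K] K, f s = 1 ∧ ∀ u ∈ S, u ≠ s → f u = 0 := by
  have hli : LinearIndepOn K id S := hS
  have hsub := hli.subset_extend (Set.subset_univ S)
  have hcoord (u : V) (hu : u ∈ S) : (Module.Basis.extend hli).coord ⟨s, hsub hs⟩ u =
      Finsupp.single (⟨u, hsub hu⟩ : hli.extend (Set.subset_univ S)) (1 : K) ⟨s, hsub hs⟩ := by
    rw [← (Module.Basis.extend hli).repr_self, Module.Basis.extend_apply_self,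
      Module.Basis.coord_apply]
  refine ⟨(Module.Basis.extend hli).coord ⟨s, hsub hs⟩, ?_, fun u hu hne => ?_⟩
  · rw [hcoord s hs, Finsupp.single_eq_same]
  · simp [hcoord u hu, hne]

namespace BasedRootSystem

variable {V : Type*} [NormedAddCommGroup V] [InnerProductSpace ℝ V] (R : BasedRootSystem V)

lemma sub_ne_sum_simple {a b : V} (ha : a ∈ R.S) (hb : b ∈ R.S) (hab : a ≠ b)
    {t : Finset V} (c : V → ℕ) (ht : ↑t ⊆ R.S) : a - b ≠ ∑ s ∈ t, (c s : ℝ) • s := by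
  intro h
  obtain ⟨f, hfb, hf⟩ := R.base_indep.exists_coord hb
  have hsum := congrArg f h
  simp only [map_sub, map_sum, map_smul, hfb, hf a ha hab, smul_eq_mul] at hsum
  have hnonneg : 0 ≤ ∑ s ∈ t, (c s : ℝ) * f s := by
    refine Finset.sum_nonneg fun s hs => mul_nonneg (Nat.cast_nonneg _) ?_
    by_cases hsb : s = b
    · simp [hsb, hfb]
    · simp [hf s (ht hs) hsb]
  linarith

/-- The difference of two distinct simple roots is not a root. -/
lemma simple_sub_simple_notMem_s5 {a b : V} (ha : a ∈ R.S) (hb : b ∈ R.S) (hab : a ≠ b) :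
    a - b ∉ R.Φ := by
  intro h
  rcases R.pos_or_neg _ h with ⟨t, c, ht, heq⟩ | ⟨t, c, ht, heq⟩
  · exact R.sub_ne_sum_simple ha hb hab c ht heq
  · exact R.sub_ne_sum_simple hb ha hab.symm c ht (by rw [← heq, neg_sub])

variable {R}

lemma inner_self_pos {a : V} (ha : a ∈ R.Φ) : 0 < ⟪a, a⟫ :=
  real_inner_self_pos.2 (R.ne_zero a ha)

lemma ne_neg_of_mem_simple {a b : V} (ha : a ∈ R.S) (hb : b ∈ R.S) : a ≠ -b := by
  intro h
  obtain ⟨f, hfb, hf⟩ := R.base_indep.exists_coord hb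
  have hfa := congrArg f h
  rw [map_neg, hfb] at hfa
  by_cases hab : a = b
  · rw [hab, hfb] at hfa
    norm_num at hfa
  · rw [hf a ha hab] at hfa
    norm_num at hfa

lemma cpair_simple_of_simplyLaced
    (hsl : ∀ α ∈ R.Φ, ∀ β ∈ R.Φ, β ≠ α → β ≠ -α →
      cpair α β = -1 ∨ cpair α β = 0 ∨ cpair α β = 1)
    {a b : V} (ha : a ∈ R.S) (hb : b ∈ R.S) (hab : a ≠ b) :
    cpair a b = -1 ∨ cpair a b = 0 := by
  have haΦ := R.base_subset ha
  have hbΦ := R.base_subset hb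
  rcases hsl a haΦ b hbΦ hab.symm (ne_neg_of_mem_simple hb ha) with h | h | h
  · exact Or.inl h
  · exact Or.inr h
  · have hmem := R.reflect_mem a haΦ b hbΦ
    rw [h, one_smul] at hmem
    exact absurd hmem (R.simple_sub_simple_notMem_s5 hb ha hab.symm)

/-- In a simply laced root system, if `γ` and `γ - a` are roots then `γ` and `a` have equal
lengths and span an angle of `π / 3`. -/
lemma inner_eq_of_sub_mem
    (hsl : ∀ α ∈ R.Φ, ∀ β ∈ R.Φ, β ≠ α → β ≠ -α →
      cpair α β = -1 ∨ cpair α β = 0 ∨ cpair α β = 1)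
    {a γ : V} (ha : a ∈ R.Φ) (hγ : γ ∈ R.Φ) (h : γ - a ∈ R.Φ) :
    2 * ⟪a, γ⟫ = ⟪a, a⟫ ∧ ⟪a, a⟫ = ⟪γ, γ⟫ := by
  have hapos := inner_self_pos ha
  have hγpos := inner_self_pos hγ
  have hnot_two : (2 : ℝ) • a ∉ R.Φ := fun h2 => by
    rcases R.reduced a ha 2 h2 with h | h <;> norm_num at h
  have hne : γ ≠ a := by
    rintro rfl
    exact R.ne_zero _ h (sub_self γ)
  have hne_neg : γ ≠ -a := by
    rintro rfl
    apply hnot_two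
    convert R.neg_mem _ h using 1
    module
  have hsub_ne : γ - a ≠ a := by
    intro h'
    apply hnot_two
    rwa [two_smul, ← sub_eq_iff_eq_add.1 h']
  have hsub_ne_neg : γ - a ≠ -a := fun h' => R.ne_zero γ hγ (by simpa using h')
  have hsub : cpair a (γ - a) = cpair a γ - 2 := by
    rw [cpair, cpair, inner_sub_right]
    field_simp
  have hone : cpair a γ = 1 := by
    have h₁ := hsl a ha γ hγ hne hne_neg
    have h₂ := hsl a ha _ h hsub_ne hsub_ne_neg
    rw [hsub] at h₂
    rcases h₁ with h₁ | h₁ | h₁ <;> rw [h₁] at h₂ <;> norm_num at h₂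
    exact h₁
  have hinner : 2 * ⟪a, γ⟫ = ⟪a, a⟫ := by
    rwa [cpair, div_eq_one_iff_eq hapos.ne'] at hone
  refine ⟨hinner, ?_⟩
  have hpair : cpair γ a = ⟪a, a⟫ / ⟪γ, γ⟫ := by
    rw [cpair, real_inner_comm, hinner]
  have hpos : 0 < cpair γ a := hpair ▸ div_pos hapos hγpos
  have hγa : cpair γ a = 1 := by
    rcases hsl γ hγ a ha hne.symm (fun h' => hne_neg (by rw [h', neg_neg])) with h' | h' | h'
    · linarith
    · linarith
    · exact h'
  rwa [hpair, div_eq_one_iff_eq hγpos.ne'] at hγa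

end BasedRootSystem

/-- Assume `Φ` is simply laced, i.e. `⟨α^∨, β⟩ ∈ {-1, 0, 1}` for all roots
`α, β` with `β ∉ {α, -α}`. Then there do not exist a root `γ` and pairwise distinct simple
roots `α₁, α₂, α₃` such that `α₂` is non-orthogonal to both `α₁` and `α₃` and
`γ - α₁`, `γ - α₂`, `γ - α₃` are all roots. -/
theorem simply_laced_no_three_simples {V : Type*} [NormedAddCommGroup V]
    [InnerProductSpace ℝ V] [FiniteDimensional ℝ V] (R : BasedRootSystem V)
    (hsl : ∀ α ∈ R.Φ, ∀ β ∈ R.Φ, β ≠ α → β ≠ -α →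
      cpair α β = -1 ∨ cpair α β = 0 ∨ cpair α β = 1) :
    ¬ ∃ γ ∈ R.Φ, ∃ α₁ ∈ R.S, ∃ α₂ ∈ R.S, ∃ α₃ ∈ R.S,
        α₁ ≠ α₂ ∧ α₁ ≠ α₃ ∧ α₂ ≠ α₃ ∧
        cpair α₂ α₁ ≠ 0 ∧ cpair α₂ α₃ ≠ 0 ∧
        γ - α₁ ∈ R.Φ ∧ γ - α₂ ∈ R.Φ ∧ γ - α₃ ∈ R.Φ := by
  rintro ⟨γ, hγ, α₁, h₁, α₂, h₂, α₃, h₃, h₁₂, h₁₃, h₂₃, hc₁, hc₃, hd₁, hd₂, hd₃⟩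
  obtain ⟨hi₁, hn₁⟩ := BasedRootSystem.inner_eq_of_sub_mem hsl (R.base_subset h₁) hγ hd₁
  obtain ⟨hi₂, hn₂⟩ := BasedRootSystem.inner_eq_of_sub_mem hsl (R.base_subset h₂) hγ hd₂
  obtain ⟨hi₃, hn₃⟩ := BasedRootSystem.inner_eq_of_sub_mem hsl (R.base_subset h₃) hγ hd₃
  have hγpos := BasedRootSystem.inner_self_pos hγ
  have hp₁ := (BasedRootSystem.cpair_simple_of_simplyLaced hsl h₂ h₁ h₁₂.symm).resolve_right hc₁
  have hp₃ := (BasedRootSystem.cpair_simple_of_simplyLaced hsl h₂ h₃ h₂₃).resolve_right hc₃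
  have hp₁₃ : cpair α₁ α₃ ≤ 0 := by
    rcases BasedRootSystem.cpair_simple_of_simplyLaced hsl h₁ h₃ h₁₃ with h | h <;>
      simp [h]
  rw [cpair, hn₂, div_eq_iff hγpos.ne'] at hp₁ hp₃
  rw [cpair, hn₁, div_le_iff₀ hγpos] at hp₁₃
  -- `α₁ + α₂ + α₃` is no longer than `γ`, but its inner product with `γ` is `3/2 * ⟪γ, γ⟫`.
  have hcs := real_inner_mul_inner_self_le (α₁ + α₂ + α₃) γ
  have hγsum : ⟪α₁ + α₂ + α₃, γ⟫ = 3 / 2 * ⟪γ, γ⟫ := by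
    simp only [inner_add_left]
    linarith
  have hsum : ⟪α₁ + α₂ + α₃, α₁ + α₂ + α₃⟫ ≤ ⟪γ, γ⟫ := by
    simp only [inner_add_left, inner_add_right]
    linarith [real_inner_comm α₂ α₁, real_inner_comm α₁ α₃, real_inner_comm α₂ α₃]
  rw [hγsum] at hcs
  nlinarith [mul_le_mul_of_nonneg_right hsum hγpos.le, mul_pos hγpos hγpos]
end

section
/- Let α be a simple root with α ∈ ℤΓ, and assume: (i) at least two elements λ of F satisfy ⟨α^∨, λ⟩ ≠ 0; (ii) λ^#(α) ≤ 1 for every λ ∈ F; (iii) the set E(α) := {λ ∈ F : λ^#(α) = 1} has at most two elements; (iv) if E(α) has exactly two elements, then E(α) = {λ ∈ F : ⟨α^∨, λ⟩ ≠ 0}. Then the set a(α) has exactly two elements, and every δ ∈ a(α) satisfies δ(λ) ≥ 0 for all λ ∈ F. -/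
open scoped RealInnerProductSpace

/-- `lam` is a dominant weight: `⟨β^∨, lam⟩` is a nonnegative integer for every simple
root `β`. -/
def BasedRootSystem.IsDominant {V : Type*} [NormedAddCommGroup V] [InnerProductSpace ℝ V]
    (R : BasedRootSystem V) (lam : V) : Prop :=
  ∀ β ∈ R.S, ∃ n : ℕ, cpair β lam = n

/-- The set `a(α) = {δ ∈ Hom(ℤΓ, ℤ) : δ(α) = 1 and (δ ∈ {λ^#} or α^∨|_{ℤΓ} - δ ∈ {λ^#})}`,
where `lsharp` is the dual basis of `F` and `acheck` is the restriction `α^∨|_{ℤΓ}` of the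
coroot of `α` to `ℤΓ`. -/
def aSet {V : Type*} [NormedAddCommGroup V] [InnerProductSpace ℝ V] (F : Finset V)
    (lsharp : V → (Submodule.span ℤ (F : Set V) →ₗ[ℤ] ℤ))
    (acheck : Submodule.span ℤ (F : Set V) →ₗ[ℤ] ℤ)
    (α : V) (hα : α ∈ Submodule.span ℤ (F : Set V)) :
    Set (Submodule.span ℤ (F : Set V) →ₗ[ℤ] ℤ) :=
  {δ | δ ⟨α, hα⟩ = 1 ∧
    ((∃ lam ∈ F, δ = lsharp lam) ∨ (∃ lam ∈ F, acheck - δ = lsharp lam))}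

/-- A linear form on the `ℤ`-span of `F` is determined by its values on `F` through the dual
family `lsharp`. -/
lemma apply_eq_sum_dual {V : Type*} [AddCommGroup V] (F : Finset V)
    (lsharp : V → (Submodule.span ℤ (F : Set V) →ₗ[ℤ] ℤ))
    (hlsharp : ∀ lam ∈ F, ∀ mu, ∀ hmu : mu ∈ F,
      (mu = lam → lsharp lam ⟨mu, Submodule.subset_span (Finset.mem_coe.mpr hmu)⟩ = 1) ∧
      (mu ≠ lam → lsharp lam ⟨mu, Submodule.subset_span (Finset.mem_coe.mpr hmu)⟩ = 0))
    (f : Submodule.span ℤ (F : Set V) →ₗ[ℤ] ℤ) (x : Submodule.span ℤ (F : Set V)) :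
    f x = ∑ lam : F, lsharp lam x *
      f ⟨lam, Submodule.subset_span (Finset.mem_coe.mpr lam.2)⟩ := by
  obtain ⟨x, hx⟩ := x
  induction hx using Submodule.span_induction with
  | mem x h =>
    rw [Finset.sum_eq_single (⟨x, h⟩ : F)]
    · rw [(hlsharp x h x h).1 rfl, one_mul]
    · intro b _ hb
      rw [(hlsharp b b.2 x h).2 (fun h' => hb (Subtype.ext h'.symm)), zero_mul]
    · simp
  | zero =>
    have h0 : (⟨0, Submodule.zero_mem _⟩ : Submodule.span ℤ (F : Set V)) = 0 := rfl
    simp [h0]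
  | add x y hx hy ihx ihy =>
    have h0 : (⟨x + y, Submodule.add_mem _ hx hy⟩ : Submodule.span ℤ (F : Set V)) =
      ⟨x, hx⟩ + ⟨y, hy⟩ := rfl
    simp only [h0, map_add, add_mul, Finset.sum_add_distrib, ← ihx, ← ihy]
  | smul a x hx ih =>
    have h0 : (⟨a • x, Submodule.smul_mem _ a hx⟩ : Submodule.span ℤ (F : Set V)) =
      a • ⟨x, hx⟩ := rfl
    simp only [h0, map_smul, smul_eq_mul, mul_assoc, ← Finset.mul_sum, ← ih]

lemma cpair_self {V : Type*} [NormedAddCommGroup V] [InnerProductSpace ℝ V]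
    {α : V} (hα : α ≠ 0) : cpair α α = 2 :=
  mul_div_cancel_right₀ 2 (inner_self_ne_zero.mpr hα)

/-- Let `α` be a simple root with `α ∈ ℤΓ` such that: (i) at least two
elements `λ` of `F` satisfy `⟨α^∨, λ⟩ ≠ 0`; (ii) `λ^#(α) ≤ 1` for every `λ ∈ F`;
(iii) `E(α) = {λ ∈ F : λ^#(α) = 1}` has at most two elements; (iv) if `E(α)` has exactly two
elements then `E(α) = {λ ∈ F : ⟨α^∨, λ⟩ ≠ 0}`.  Then `a(α)` has exactly two elements and
every `δ ∈ a(α)` satisfies `δ(λ) ≥ 0` for all `λ ∈ F`. -/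
theorem aSet_two_elements {V : Type*} [NormedAddCommGroup V] [InnerProductSpace ℝ V]
    [FiniteDimensional ℝ V] (R : BasedRootSystem V) (F : Finset V)
    (hFdom : ∀ lam ∈ F, R.IsDominant lam)
    (hFindep : LinearIndependent ℝ (Subtype.val : ↥(F : Set V) → V))
    (lsharp : V → (Submodule.span ℤ (F : Set V) →ₗ[ℤ] ℤ))
    (hlsharp : ∀ lam ∈ F, ∀ mu, ∀ hmu : mu ∈ F,
      (mu = lam → lsharp lam ⟨mu, Submodule.subset_span (Finset.mem_coe.mpr hmu)⟩ = 1) ∧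
      (mu ≠ lam → lsharp lam ⟨mu, Submodule.subset_span (Finset.mem_coe.mpr hmu)⟩ = 0))
    (α : V) (hαS : α ∈ R.S) (hα : α ∈ Submodule.span ℤ (F : Set V))
    (acheck : Submodule.span ℤ (F : Set V) →ₗ[ℤ] ℤ)
    (hacheck : ∀ x : Submodule.span ℤ (F : Set V), (acheck x : ℝ) = cpair α x)
    (htwo : ∃ lam ∈ F, ∃ mu ∈ F, lam ≠ mu ∧ cpair α lam ≠ 0 ∧ cpair α mu ≠ 0)
    (hle : ∀ lam ∈ F, lsharp lam ⟨α, hα⟩ ≤ 1)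
    (hcard : Set.ncard {lam ∈ (F : Set V) | lsharp lam ⟨α, hα⟩ = 1} ≤ 2)
    (heq : Set.ncard {lam ∈ (F : Set V) | lsharp lam ⟨α, hα⟩ = 1} = 2 →
      {lam ∈ (F : Set V) | lsharp lam ⟨α, hα⟩ = 1} =
        {lam ∈ (F : Set V) | cpair α lam ≠ 0}) :
    Set.ncard (aSet F lsharp acheck α hα) = 2 ∧
      ∀ δ ∈ aSet F lsharp acheck α hα, ∀ lam, ∀ hlam : lam ∈ F,
        0 ≤ δ ⟨lam, Submodule.subset_span (Finset.mem_coe.mpr hlam)⟩ := by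
  classical
  have expand := apply_eq_sum_dual F lsharp hlsharp
  have hα2 : acheck ⟨α, hα⟩ = 2 := by
    have h := hacheck ⟨α, hα⟩
    rw [cpair_self (R.ne_zero α (R.base_subset hαS))] at h
    exact_mod_cast h
  have coroot_ne_zero : ∀ lam (h : lam ∈ F), cpair α lam ≠ 0 ↔
      acheck ⟨lam, Submodule.subset_span (Finset.mem_coe.mpr h)⟩ ≠ 0 := by
    intro lam h
    rw [← hacheck ⟨lam, Submodule.subset_span (Finset.mem_coe.mpr h)⟩, Int.cast_ne_zero]
  have coroot_nonneg : ∀ lam (h : lam ∈ F),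
      0 ≤ acheck ⟨lam, Submodule.subset_span (Finset.mem_coe.mpr h)⟩ := by
    intro lam h
    obtain ⟨n, hn⟩ := hFdom lam h α hαS
    rw [← hacheck ⟨lam, Submodule.subset_span (Finset.mem_coe.mpr h)⟩] at hn
    have : acheck ⟨lam, Submodule.subset_span (Finset.mem_coe.mpr h)⟩ = n := by exact_mod_cast hn
    omega
  have dual_nonneg : ∀ lam ∈ F, ∀ mu (h : mu ∈ F),
      0 ≤ lsharp lam ⟨mu, Submodule.subset_span (Finset.mem_coe.mpr h)⟩ := by
    intro lam hlam mu h
    by_cases e : mu = lam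
    · rw [(hlsharp lam hlam mu h).1 e]; exact zero_le_one
    · rw [(hlsharp lam hlam mu h).2 e]
  have hsum := expand acheck ⟨α, hα⟩
  rw [hα2] at hsum
  set E : Set V := {lam ∈ (F : Set V) | lsharp lam ⟨α, hα⟩ = 1}
  have hEfin : E.Finite := F.finite_toSet.subset (Set.sep_subset _ _)
  have mem_aSet : ∀ δ, δ ∈ aSet F lsharp acheck α hα ↔
      ∃ lam ∈ E, δ = lsharp lam ∨ δ = acheck - lsharp lam := by
    intro δ
    constructor
    · rintro ⟨h1, ⟨lam, hl, rfl⟩ | ⟨lam, hl, h⟩⟩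
      · exact ⟨lam, ⟨hl, h1⟩, Or.inl rfl⟩
      · refine ⟨lam, ⟨hl, ?_⟩, Or.inr ?_⟩
        · rw [← h, LinearMap.sub_apply, hα2, h1]; rfl
        · rw [← h, sub_sub_cancel]
    · rintro ⟨lam, ⟨hl, h1⟩, rfl | rfl⟩
      · exact ⟨h1, Or.inl ⟨lam, hl, rfl⟩⟩
      · refine ⟨?_, Or.inr ⟨lam, hl, sub_sub_cancel _ _⟩⟩
        rw [LinearMap.sub_apply, hα2, h1]; rfl
  have hEne : E.ncard ≠ 0 := by
    intro h0
    rw [Set.ncard_eq_zero hEfin] at h0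
    have : ∑ lam : F, lsharp lam ⟨α, hα⟩ *
        acheck ⟨lam, Submodule.subset_span (Finset.mem_coe.mpr lam.2)⟩ ≤ 0 := by
      refine Finset.sum_nonpos fun lam _ => mul_nonpos_of_nonpos_of_nonneg ?_
        (coroot_nonneg lam lam.2)
      have h1 : lsharp lam ⟨α, hα⟩ ≠ 1 := fun h =>
        (h0 ▸ (⟨lam.2, h⟩ : (lam : V) ∈ E) : (lam : V) ∈ (∅ : Set V))
      have := hle lam lam.2
      omega
    omega
  obtain hc | hc : E.ncard = 1 ∨ E.ncard = 2 := by omega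
  · obtain ⟨a, ha⟩ := Set.ncard_eq_one.mp hc
    have haE : a ∈ E := ha ▸ Set.mem_singleton a
    have haF : a ∈ F := haE.1
    have hset : aSet F lsharp acheck α hα = {lsharp a, acheck - lsharp a} := by
      ext δ
      simp [mem_aSet, ha]
    have hge : 2 ≤ acheck ⟨a, Submodule.subset_span (Finset.mem_coe.mpr haF)⟩ := by
      rw [hsum, Fintype.sum_eq_add_sum_compl (⟨a, haF⟩ : F), haE.2, one_mul]
      refine add_le_of_nonpos_right (Finset.sum_nonpos fun lam hlam =>
        mul_nonpos_of_nonpos_of_nonneg ?_ (coroot_nonneg lam lam.2))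
      have h1 : lsharp lam ⟨α, hα⟩ ≠ 1 := by
        intro h
        have h2 : (lam : V) ∈ E := ⟨lam.2, h⟩
        rw [ha] at h2
        simp only [Finset.mem_compl, Finset.mem_singleton] at hlam
        exact hlam (Subtype.ext h2)
      have := hle lam lam.2
      omega
    obtain ⟨b, hbF, hba, hb⟩ : ∃ b, ∃ _ : b ∈ F, b ≠ a ∧ cpair α b ≠ 0 := by
      obtain ⟨l, hl, m, hm, hne, hcl, hcm⟩ := htwo
      by_cases e : l = a
      · exact ⟨m, hm, fun h => hne (e.trans h.symm), hcm⟩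
      · exact ⟨l, hl, e, hcl⟩
    rw [coroot_ne_zero b hbF] at hb
    rw [hset]
    refine ⟨Set.ncard_pair fun h => hb ?_, ?_⟩
    · have h' := LinearMap.congr_fun h ⟨b, Submodule.subset_span (Finset.mem_coe.mpr hbF)⟩
      rw [LinearMap.sub_apply, (hlsharp a haF b hbF).2 hba, sub_zero] at h'
      exact h'.symm
    · rintro δ (rfl | rfl) lam hlam
      · exact dual_nonneg a haF lam hlam
      · rw [LinearMap.sub_apply]
        by_cases e : lam = a
        · subst e
          rw [(hlsharp lam haF lam hlam).1 rfl]
          omega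
        · rw [(hlsharp a haF lam hlam).2 e, sub_zero]
          exact coroot_nonneg lam hlam
  · obtain ⟨a, b, hab, hEab⟩ := Set.ncard_eq_two.mp hc
    have haE : a ∈ E := hEab ▸ Set.mem_insert a {b}
    have hbE : b ∈ E := hEab ▸ Set.mem_insert_of_mem a rfl
    have haF : a ∈ F := haE.1
    have hbF : b ∈ F := hbE.1
    have hsupp := heq hc
    have coroot_zero : ∀ lam (h : lam ∈ F), lam ≠ a → lam ≠ b →
        acheck ⟨lam, Submodule.subset_span (Finset.mem_coe.mpr h)⟩ = 0 := by
      intro lam h hla hlb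
      by_contra h0
      have h1 : lam ∈ E := hsupp ▸ ⟨h, (coroot_ne_zero lam h).mpr h0⟩
      rw [hEab] at h1
      exact h1.elim hla hlb
    have coroot_eq_add : ∀ x, acheck x =
        lsharp a x * acheck ⟨a, Submodule.subset_span (Finset.mem_coe.mpr haF)⟩ +
        lsharp b x * acheck ⟨b, Submodule.subset_span (Finset.mem_coe.mpr hbF)⟩ := by
      intro x
      rw [expand acheck x]
      refine Fintype.sum_eq_add (⟨a, haF⟩ : F) ⟨b, hbF⟩ (by simpa using hab) ?_
      rintro ⟨lam, h⟩ ⟨hla, hlb⟩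
      rw [coroot_zero lam h (by simpa using hla) (by simpa using hlb), mul_zero]
    have ha0 := (coroot_ne_zero a haF).mp (hsupp.subset haE).2
    have hb0 := (coroot_ne_zero b hbF).mp (hsupp.subset hbE).2
    have ha1 := coroot_nonneg a haF
    have hb1 := coroot_nonneg b hbF
    have h2 := coroot_eq_add ⟨α, hα⟩
    rw [hα2, haE.2, hbE.2] at h2
    have hacheck_eq : acheck = lsharp a + lsharp b := by
      ext x
      rw [coroot_eq_add x, LinearMap.add_apply,
        show acheck ⟨a, Submodule.subset_span (Finset.mem_coe.mpr haF)⟩ = 1 by omega,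
        show acheck ⟨b, Submodule.subset_span (Finset.mem_coe.mpr hbF)⟩ = 1 by omega,
        mul_one, mul_one]
    have hset : aSet F lsharp acheck α hα = {lsharp a, lsharp b} := by
      ext δ
      rw [mem_aSet, hEab, hacheck_eq]
      simp only [Set.mem_insert_iff, Set.mem_singleton_iff, exists_eq_or_imp, exists_eq_left,
        add_sub_cancel_left, add_sub_cancel_right]
      tauto
    rw [hset]
    refine ⟨Set.ncard_pair fun h => ?_, ?_⟩
    · have h' := LinearMap.congr_fun h ⟨a, Submodule.subset_span (Finset.mem_coe.mpr haF)⟩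
      rw [(hlsharp a haF a haF).1 rfl, (hlsharp b hbF a haF).2 hab] at h'
      exact one_ne_zero h'
    · rintro δ (rfl | rfl) lam hlam
      · exact dual_nonneg a haF lam hlam
      · exact dual_nonneg b hbF lam hlam
end
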